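/- arXiv:2505.24720 — 3 statements merged into one kernel-verified Lean document; each statement's English description precedes it below -/
import Mathlib

section
/- Let k be a field, V a finite-dimensional k-vector space, and W_0, …, W_n (n ≥ 0) nonzero linear subspaces of V that together span V and whose dimensions sum to dim V. Let v ∈ V be a general vector, i.e., for every index i, v does not lie in the span of the subspaces W_j with j ≠ i. Then there exists a unique linear subspace M ⊆ V with dim M = n + 1, v ∈ M, and M ∩ W_i ≠ 0 for every i. (This is the vector-space form of the paper's Lemma on linear spaces in projective space: if linear subspaces L_0, …, L_n ⊆ ℙ^N span ℙ^N and ∑(1 + dim L_i) = 1 + N, then through a general point p ∈ ℙ^N there is a unique n-dimensional linear subvariety meeting every L_i.) -/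
/-- **Spanning lemma (vector-space form).**
Let `k` be a field, `V` a finite-dimensional `k`-vector space, and
`W 0, …, W n` nonzero subspaces of `V` that together span `V` and whose
dimensions sum to `dim V`.  If `v ∈ V` is general, i.e. for every `i`, `v`
does not lie in the span of the `W j` with `j ≠ i`, then there is a unique
subspace `M ⊆ V` with `dim M = n + 1`, `v ∈ M`, and `M ∩ W i ≠ 0` for all
`i`. -/
theorem unique_subspace_through_general_vector
    (k : Type*) [Field k] (V : Type*) [AddCommGroup V] [Module k V]
    [FiniteDimensional k V] (n : ℕ) (W : Fin (n + 1) → Submodule k V)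
    (hW_ne : ∀ i, W i ≠ ⊥)
    (hW_span : ⨆ i, W i = ⊤)
    (hW_dim : ∑ i, Module.finrank k (W i) = Module.finrank k V)
    (v : V)
    (hv_gen : ∀ i, v ∉ ⨆ j, ⨆ _ : j ≠ i, W j) :
    ∃! M : Submodule k V,
      Module.finrank k M = n + 1 ∧ v ∈ M ∧ ∀ i, M ⊓ W i ≠ ⊥ := by
  classical
  let S : (∀ i, W i) →ₗ[k] V := LinearMap.lsum k (fun i => W i) k (fun i => (W i).subtype)
  have hS : ∀ f, S f = ∑ i, (f i : V) := by
    intro f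
    simp [S, LinearMap.lsum_apply]
  have hsurj : Function.Surjective S := by
    rw [← LinearMap.range_eq_top, eq_top_iff, ← hW_span]
    refine iSup_le fun i x hx => ⟨Pi.single i ⟨x, hx⟩, ?_⟩
    rw [hS, Finset.sum_eq_single i]
    · simp
    · intro j _ hj
      simp [Pi.single_eq_of_ne hj]
    · simp
  have hinj : Function.Injective S := by
    refine (LinearMap.injective_iff_surjective_of_finrank_eq_finrank ?_).2 hsurj
    rw [Module.finrank_pi_fintype, hW_dim]
  have hli : ∀ u : (∀ i, W i), (∀ i, u i ≠ 0) → LinearIndependent k (fun i => (u i : V)) := by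
    intro u hu
    rw [Fintype.linearIndependent_iff]
    intro g hg i
    have h0 : (fun i => g i • u i) = (0 : ∀ i, W i) := by
      apply hinj
      rw [hS, map_zero, ← hg]
      simp
    have := congrFun h0 i
    exact (smul_eq_zero.1 this).resolve_right (hu i)
  obtain ⟨w, hw⟩ := hsurj v
  have hw0 : ∀ i, w i ≠ 0 := by
    intro i hi
    apply hv_gen i
    rw [← hw, hS]
    refine Submodule.sum_mem _ fun j _ => ?_
    by_cases hj : j = i
    · subst hj
      simp [hi]
    · exact Submodule.mem_iSup_of_mem j (Submodule.mem_iSup_of_mem hj (w j).2)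
  have hdim : ∀ u : (∀ i, W i), (∀ i, u i ≠ 0) →
      Module.finrank k (Submodule.span k (Set.range fun i => (u i : V))) = n + 1 := by
    intro u hu
    rw [finrank_span_eq_card (hli u hu), Fintype.card_fin]
  refine ⟨Submodule.span k (Set.range fun i => (w i : V)), ⟨hdim w hw0, ?_, ?_⟩, ?_⟩
  · rw [← hw, hS]
    exact Submodule.sum_mem _ fun j _ => Submodule.subset_span ⟨j, rfl⟩
  · intro i
    rw [Submodule.ne_bot_iff]
    exact ⟨w i, ⟨Submodule.subset_span ⟨i, rfl⟩, (w i).2⟩, by simpa using hw0 i⟩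
  · rintro M ⟨hM, hvM, hMW⟩
    have hex : ∀ i, ∃ u : W i, (u : V) ∈ M ∧ u ≠ 0 := by
      intro i
      obtain ⟨x, hx, hx0⟩ := (Submodule.ne_bot_iff _).1 (hMW i)
      exact ⟨⟨x, hx.2⟩, hx.1, fun h => hx0 (congrArg Subtype.val h)⟩
    choose u huM hu0 using hex
    have hspan : Submodule.span k (Set.range fun i => (u i : V)) = M := by
      apply Submodule.eq_of_le_of_finrank_eq
      · rw [Submodule.span_le]
        rintro _ ⟨i, rfl⟩
        exact huM i
      · rw [hdim u hu0, hM]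
    rw [← hspan, Submodule.mem_span_range_iff_exists_fun] at hvM
    obtain ⟨c, hc⟩ := hvM
    have hwc : (fun i => c i • u i) = w := by
      apply hinj
      rw [hw, hS, ← hc]
      simp
    symm
    apply Submodule.eq_of_le_of_finrank_eq
    · rw [Submodule.span_le]
      rintro _ ⟨i, rfl⟩
      rw [← hwc]
      exact M.smul_mem _ (huM i)
    · rw [hdim w hw0, hM]
end

section
/- Let k be a field, V a finite-dimensional k-vector space, and W_0, …, W_n nonzero linear subspaces of V that together span V and whose dimensions sum to dim V, so that V = W_0 ⊕ ⋯ ⊕ W_n is an internal direct sum. Let v ∈ V be a general vector, i.e., for every index i, v does not lie in the span of the subspaces W_j with j ≠ i, and write v = v_0 + ⋯ + v_n with v_i ∈ W_i the components of v under the direct sum decomposition. Then each v_i is nonzero, the family (v_0, …, v_n) is linearly independent, the subspace M = span{v_0, …, v_n} has dimension n + 1, contains v, satisfies dim(M ∩ W_i) = 1 for every i, and M is the unique subspace of dimension n + 1 containing v with M ∩ W_i ≠ 0 for all i. -/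
/-- **Spanning lemma, explicit form.**
Let `V = W 0 ⊕ ⋯ ⊕ W n` be an internal direct sum of nonzero subspaces
(`⨆ i, W i = ⊤` and `∑ dim W i = dim V`), and let `v` be a general vector,
written as `v = v₀ + ⋯ + vₙ` with `vᵢ ∈ W i`.  Then each `vᵢ` is nonzero,
the family `(v₀, …, vₙ)` is linearly independent, the subspace
`M = span {v₀, …, vₙ}` has dimension `n + 1`, contains `v`, meets each `W i`
in a line, and `M` is the unique `(n+1)`-dimensional subspace containing `v`
that meets every `W i` nontrivially. -/
theorem general_vector_components_span_unique_subspace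
    (k : Type*) [Field k] (V : Type*) [AddCommGroup V] [Module k V]
    [FiniteDimensional k V] (n : ℕ) (W : Fin (n + 1) → Submodule k V)
    (hW_ne : ∀ i, W i ≠ ⊥)
    (hW_span : ⨆ i, W i = ⊤)
    (hW_dim : ∑ i, Module.finrank k (W i) = Module.finrank k V)
    (v : V)
    (hv_gen : ∀ i, v ∉ ⨆ j, ⨆ _ : j ≠ i, W j)
    (c : Fin (n + 1) → V)
    (hc_mem : ∀ i, c i ∈ W i)
    (hc_sum : v = ∑ i, c i) :
    (∀ i, c i ≠ 0) ∧
    LinearIndependent k c ∧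
    Module.finrank k (Submodule.span k (Set.range c)) = n + 1 ∧
    v ∈ Submodule.span k (Set.range c) ∧
    (∀ i, Module.finrank k ↥(Submodule.span k (Set.range c) ⊓ W i) = 1) ∧
    (∀ M : Submodule k V, Module.finrank k M = n + 1 → v ∈ M →
      (∀ i, M ⊓ W i ≠ ⊥) → M = Submodule.span k (Set.range c)) := by
  have U : ∀ a b : Fin (n + 1) → V, (∀ i, a i ∈ W i) → (∀ i, b i ∈ W i) →
      ∑ i, a i = ∑ i, b i → ∀ i, a i = b i := by
    let f : (∀ i, W i) →ₗ[k] V := ∑ i, (W i).subtype ∘ₗ LinearMap.proj i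
    have hf : ∀ x, f x = ∑ i, (x i : V) := by
      intro x
      simp [f, LinearMap.sum_apply]
    have hsurj : Function.Surjective f := by
      rw [← LinearMap.range_eq_top, eq_top_iff, ← hW_span]
      refine iSup_le fun i x hx => ⟨Pi.single i ⟨x, hx⟩, ?_⟩
      rw [hf, Finset.sum_eq_single i]
      · simp
      · intro j _ hj
        simp [Pi.single_eq_of_ne hj]
      · simp
    have hdim : Module.finrank k (∀ i, W i) = Module.finrank k V := by
      rw [Module.finrank_pi_fintype, hW_dim]
    have hinj : Function.Injective f :=
      (LinearMap.injective_iff_surjective_of_finrank_eq_finrank hdim).2 hsurj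
    intro a b ha hb hab i
    have h : (fun i => (⟨a i, ha i⟩ : W i)) = fun i => ⟨b i, hb i⟩ := by
      apply hinj
      rw [hf, hf]
      exact hab
    exact congrArg Subtype.val (congrFun h i)
  have L : ∀ d : Fin (n + 1) → V, (∀ i, d i ∈ W i) → (∀ i, d i ≠ 0) →
      LinearIndependent k d := by
    intro d hd h0
    rw [Fintype.linearIndependent_iff]
    intro g hg i
    have := U (fun i => g i • d i) (fun _ => 0) (fun i => (W i).smul_mem _ (hd i))
      (fun i => (W i).zero_mem) (by simpa using hg) i
    exact (smul_eq_zero.1 this).resolve_right (h0 i)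
  have F : ∀ d : Fin (n + 1) → V, (∀ i, d i ∈ W i) → (∀ i, d i ≠ 0) →
      Module.finrank k (Submodule.span k (Set.range d)) = n + 1 := by
    intro d hd h0
    rw [finrank_span_eq_card (L d hd h0), Fintype.card_fin]
  have hc0 : ∀ i, c i ≠ 0 := by
    intro i hi
    apply hv_gen i
    rw [hc_sum]
    refine Submodule.sum_mem _ fun j _ => ?_
    by_cases hj : j = i
    · rw [hj, hi]
      exact Submodule.zero_mem _
    · exact (le_iSup₂_of_le (f := fun j (_ : j ≠ i) => W j) j hj le_rfl) (hc_mem j)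
  have hcs : ∀ i, c i ∈ Submodule.span k (Set.range c) := fun i =>
    Submodule.subset_span ⟨i, rfl⟩
  refine ⟨hc0, L c hc_mem hc0, F c hc_mem hc0, ?_, ?_, ?_⟩
  · rw [hc_sum]
    exact Submodule.sum_mem _ fun j _ => hcs j
  · intro i
    have : Submodule.span k (Set.range c) ⊓ W i = Submodule.span k {c i} := by
      apply le_antisymm
      · rintro x ⟨hx, hxi⟩
        obtain ⟨g, hg⟩ := (Submodule.mem_span_range_iff_exists_fun k).1 hx
        have := U (fun i => g i • c i) (Pi.single i x) (fun i => (W i).smul_mem _ (hc_mem i))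
          (fun j => by
            by_cases hj : j = i
            · subst hj
              simpa using hxi
            · simp [Pi.single_eq_of_ne hj]) (by simpa using hg) i
        rw [Submodule.mem_span_singleton]
        exact ⟨g i, by simpa using this⟩
      · rw [Submodule.span_singleton_le_iff_mem]
        exact ⟨hcs i, hc_mem i⟩
    rw [this, finrank_span_singleton (hc0 i)]
  · intro M hM hvM hMW
    have hex : ∀ i, ∃ d ∈ M ⊓ W i, d ≠ 0 := fun i => Submodule.exists_mem_ne_zero_of_ne_bot (hMW i)
    choose d hd hd0 using hex
    have hdM : Submodule.span k (Set.range d) = M := by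
      apply Submodule.eq_of_le_of_finrank_eq
      · rw [Submodule.span_le]
        rintro _ ⟨i, rfl⟩
        exact (hd i).1
      · rw [F d (fun i => (hd i).2) hd0, hM]
    rw [← hdM] at hvM
    obtain ⟨g, hg⟩ := (Submodule.mem_span_range_iff_exists_fun k).1 hvM
    have := U c (fun i => g i • d i) hc_mem (fun i => (W i).smul_mem _ (hd i).2)
      (by rw [hg, hc_sum])
    symm
    apply Submodule.eq_of_le_of_finrank_eq
    · rw [Submodule.span_le]
      rintro _ ⟨i, rfl⟩
      rw [this i]
      exact M.smul_mem _ (hd i).1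
    · rw [F c hc_mem hc0, hM]
end

section
/- Let k be a field and let D_1 and D_2 be finite-dimensional division algebras over k whose centers equal k (i.e., central division k-algebras). Assume that dim_k D_1 and dim_k D_2 are coprime. Then the tensor product D_1 ⊗_k D_2 is a division algebra, i.e., every nonzero element of D_1 ⊗_k D_2 is invertible. (This is the algebraic content of the primary decomposition lemma: if P and Q are minimal Severi–Brauer varieties with (dim P + 1, dim Q + 1) = 1, then P ⊗ Q is the minimal Severi–Brauer variety in the Brauer class [P]·[Q].) -/
open scoped TensorProduct

theorem finrank_dvd_finrank_ideal_aux (k : Type*) [Field k] (D A : Type*) [DivisionRing D]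
    [Algebra k D] [Ring A] [Algebra k A] (f : D →ₐ[k] A) (I : Ideal A) :
    Module.finrank k D ∣ Module.finrank k (I.restrictScalars k) := by
  letI : Module D I := Module.compHom I f.toRingHom
  haveI : IsScalarTower k D I := by
    refine ⟨fun c d v => ?_⟩
    change f (c • d) • v = c • (f d • v)
    rw [map_smul, smul_assoc]
  exact ⟨_, (Module.finrank_mul_finrank k D I).symm⟩

/-- **Tensor product of central division algebras of coprime degrees.**
If `D₁`, `D₂` are finite-dimensional central division algebras over a field
`k` and `dim_k D₁`, `dim_k D₂` are coprime, then `D₁ ⊗[k] D₂` is a division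
algebra: every nonzero element is invertible. -/
theorem tensorProduct_divisionAlgebra_of_coprime_finrank
    (k : Type*) [Field k]
    (D₁ D₂ : Type*) [DivisionRing D₁] [DivisionRing D₂]
    [Algebra k D₁] [Algebra k D₂]
    [FiniteDimensional k D₁] [FiniteDimensional k D₂]
    [Algebra.IsCentral k D₁] [Algebra.IsCentral k D₂]
    (h : Nat.Coprime (Module.finrank k D₁) (Module.finrank k D₂)) :
    ∀ x : D₁ ⊗[k] D₂, x ≠ 0 → IsUnit x := by
  -- every nonzero left ideal has dimension divisible by that of the whole algebra
  have key : ∀ x : D₁ ⊗[k] D₂, x ≠ 0 → ∃ y, y * x = 1 := by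
    intro x hx
    let I : Ideal (D₁ ⊗[k] D₂) := Ideal.span {x}
    have h1 := finrank_dvd_finrank_ideal_aux k D₁ _
      (Algebra.TensorProduct.includeLeft : D₁ →ₐ[k] D₁ ⊗[k] D₂) I
    have h2 := finrank_dvd_finrank_ideal_aux k D₂ _
      (Algebra.TensorProduct.includeRight : D₂ →ₐ[k] D₁ ⊗[k] D₂) I
    have h3 := h.mul_dvd_of_dvd_of_dvd h1 h2
    rw [← Module.finrank_tensorProduct] at h3
    have hxI : x ∈ I.restrictScalars k := Ideal.subset_span rfl
    have hpos : 0 < Module.finrank k (I.restrictScalars k) := by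
      haveI : Nontrivial (I.restrictScalars k) :=
        ⟨⟨⟨x, hxI⟩, 0, fun e => hx (congrArg Subtype.val e)⟩⟩
      exact Module.finrank_pos
    have htop : I.restrictScalars k = ⊤ :=
      Submodule.eq_top_of_finrank_eq
        (le_antisymm (Submodule.finrank_le _) (Nat.le_of_dvd hpos h3))
    have h1I : (1 : D₁ ⊗[k] D₂) ∈ I.restrictScalars k := htop ▸ Submodule.mem_top
    exact Ideal.mem_span_singleton'.mp h1I
  intro x hx
  obtain ⟨y, hy⟩ := key x hx
  have hy0 : y ≠ 0 := by
    rintro rfl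
    rw [zero_mul] at hy
    exact hx (by rw [← mul_one x, ← hy, mul_zero])
  obtain ⟨z, hz⟩ := key y hy0
  have hzx : z = x := left_inv_eq_right_inv hz hy
  exact ⟨⟨x, y, hzx ▸ hz, hy⟩, rfl⟩
end
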